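/- Let X be a compact Hausdorff topological space with its Borel σ-algebra, let ι be an index type carrying a filter L ≠ ⊥ (a net), let μ be a Borel probability measure on X and let μ_i (i : ι) be Borel probability measures on X. Assume that for every continuous function f : X → ℝ with ∫ f dμ > 0 one has liminf_{i along L} ∫ f d(μ_i) ≥ 0. Then for every continuous function f : X → ℝ, the net i ↦ ∫ f d(μ_i) tends along L to ∫ f dμ. -/

import Mathlib

open MeasureTheory

/-!
Subtracting a constant `c < ∫ f dμ` from `f` gives a function of positive `μ`-integral, and since
all measures have mass one the hypothesis becomes `liminf_i ∫ f dμ_i ≥ c`: the integrals are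
eventually larger than any number below `∫ f dμ` (`eventually_lt_integral`). The same bound for
`-f` controls them from above.
-/

lemma integrable_continuousMap {X : Type*} [TopologicalSpace X] [CompactSpace X]
    [MeasurableSpace X] [BorelSpace X] (ν : Measure X) [IsFiniteMeasure ν] (f : C(X, ℝ)) :
    Integrable (fun x => f x) ν :=
  f.continuous.integrable_of_hasCompactSupport (HasCompactSupport.of_compactSpace _)

/-- The lower half of the convergence: the limit inferior of the integrals of `f` is at least
`∫ f dμ`. -/
lemma eventually_lt_integral
    {X : Type*} [TopologicalSpace X] [CompactSpace X]
    [MeasurableSpace X] [BorelSpace X] {ι : Type*} (L : Filter ι)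
    (μ : Measure X) [IsProbabilityMeasure μ]
    (μs : ι → Measure X) (hμs : ∀ i, IsProbabilityMeasure (μs i))
    (h : ∀ f : C(X, ℝ), 0 < ∫ x, f x ∂μ →
      0 ≤ Filter.liminf (fun i => ∫ x, f x ∂(μs i)) L)
    (f : C(X, ℝ)) (a : ℝ) (ha : a < ∫ x, f x ∂μ) :
    ∀ᶠ i in L, a < ∫ x, f x ∂(μs i) := by
  -- The hypothesis bounds the limit inferior only weakly, so a constant strictly between
  -- `a` and `∫ f dμ` is subtracted.
  obtain ⟨c, hac, hc⟩ := exists_between ha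
  have hsub : ∀ (ν : Measure X) [IsProbabilityMeasure ν],
      ∫ x, (f - ContinuousMap.const X c) x ∂ν = (∫ x, f x ∂ν) - c := by
    intro ν _
    simp [integral_sub (integrable_continuousMap ν f) (integrable_const c)]
  have hlim := h (f - ContinuousMap.const X c) (by rw [hsub]; linarith)
  -- Without this bound the real-valued `liminf` could take a junk value.
  have hbdd : L.IsBoundedUnder (· ≥ ·)
      (fun i => ∫ x, (f - ContinuousMap.const X c) x ∂(μs i)) := by
    refine Filter.isBoundedUnder_of ⟨-‖f - ContinuousMap.const X c‖, fun i => ?_⟩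
    have := hμs i
    have hn := norm_integral_le_of_norm_le_const (μ := μs i)
      (Filter.Eventually.of_forall (f - ContinuousMap.const X c).norm_coe_le_norm)
    rw [probReal_univ, mul_one] at hn
    exact (abs_le.mp hn).1
  filter_upwards [Filter.eventually_lt_of_lt_liminf
    (show a - c < _ from (sub_neg.mpr hac).trans_le hlim) hbdd] with i hi
  have := hμs i
  rw [hsub] at hi
  linarith

/-- If `μ` and the `μ i` are Borel probability measures on a compact Hausdorff
space and, for every continuous `f` with `∫ f dμ > 0`, one has
`liminf_i ∫ f dμ_i ≥ 0` along the net `L`, then `∫ f dμ_i → ∫ f dμ` along `L`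
for every continuous `f`. -/
theorem tendsto_integral_of_liminf_nonneg
    {X : Type*} [TopologicalSpace X] [CompactSpace X] [T2Space X]
    [MeasurableSpace X] [BorelSpace X]
    {ι : Type*} (L : Filter ι) [L.NeBot]
    (μ : Measure X) [IsProbabilityMeasure μ]
    (μs : ι → Measure X) (hμs : ∀ i, IsProbabilityMeasure (μs i))
    (h : ∀ f : C(X, ℝ), 0 < ∫ x, f x ∂μ →
      0 ≤ Filter.liminf (fun i => ∫ x, f x ∂(μs i)) L) :
    ∀ f : C(X, ℝ),
      Filter.Tendsto (fun i => ∫ x, f x ∂(μs i)) L (nhds (∫ x, f x ∂μ)) := by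
  intro f
  refine tendsto_order.2 ⟨eventually_lt_integral L μ μs hμs h f, fun b hb => ?_⟩
  have hneg := eventually_lt_integral L μ μs hμs h (-f) (-b)
    (by simpa [integral_neg] using hb)
  simpa [integral_neg] using hneg
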